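/- Let q ≥ 2 and L ≥ 2 be integers and let C ⊆ [q]^n be a code. If the matrix φ(C)/√((q−1)n) satisfies RIP-2 of order L with constant 1/2, then every set of L distinct codewords of C has average pairwise relative Hamming distance at least (1 − 1/q)·(1 − 1/(2(L−1))). -/

import Mathlib

open scoped BigOperators

/-- Relative Hamming distance between two strings of length n. -/
noncomputable def relDist {n : ℕ} {A : Type*} (x y : Fin n → A) : ℝ :=
  ({i : Fin n | x i ≠ y i}.ncard : ℝ) / (n : ℝ)

/-- A code C ⊆ A^n is (ρ, L)-list decodable if every Hamming ball of relative
radius (strictly) ρ contains at most L codewords. -/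
def listDecodable {n : ℕ} {A : Type*} (C : Set (Fin n → A)) (ρ L : ℝ) : Prop :=
  ∀ y : Fin n → A, ({c | c ∈ C ∧ relDist c y < ρ}.ncard : ℝ) ≤ L

/-- Average pairwise relative Hamming distance of an L-tuple of codewords. -/
noncomputable def avgPairDist {n L : ℕ} {A : Type*} (c : Fin L → (Fin n → A)) : ℝ :=
  (∑ i : Fin L, ∑ j : Fin L, if i < j then relDist (c i) (c j) else 0) / (L.choose 2 : ℝ)

/-- Simplex encoding of a symbol x ∈ {0,…,q−1}: the vector (ω^{x·α})_{α ∈ {1,…,q−1}}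
in ℂ^{q−1}, where ω = e^{2πi/q}. -/
noncomputable def simplexEnc (q : ℕ) (x : ℕ) (α : Fin (q - 1)) : ℂ :=
  Complex.exp (2 * (Real.pi : ℂ) * Complex.I * (x : ℂ) * (((α : ℕ) : ℂ) + 1) / (q : ℂ))

/-- Coordinatewise extension of the simplex encoding to strings in [q]^n,
giving a vector in ℂ^{(q−1)n}. -/
noncomputable def simplexEncVec (q n : ℕ) (x : Fin n → Fin q) : Fin n × Fin (q - 1) → ℂ :=
  fun p => simplexEnc q (x p.1 : ℕ) p.2

/-- A complex matrix M satisfies RIP-2 of order k with constant δ if for every vector x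
with at most k nonzero coordinates, (1−δ)‖x‖₂² ≤ ‖Mx‖₂² ≤ (1+δ)‖x‖₂². -/
def RIP2 {R C : Type*} [Fintype R] [Fintype C] (M : Matrix R C ℂ) (k : ℕ) (δ : ℝ) : Prop :=
  ∀ x : C → ℂ, ({c | x c ≠ 0}.ncard ≤ k) →
    (1 - δ) * (∑ c, Complex.normSq (x c)) ≤ (∑ r, Complex.normSq (M.mulVec x r)) ∧
    (∑ r, Complex.normSq (M.mulVec x r)) ≤ (1 + δ) * (∑ c, Complex.normSq (x c))

lemma simplex_inner (q : ℕ) (hq : 2 ≤ q) (x y : Fin q) :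
    ∑ α : Fin (q - 1), simplexEnc q x α * (starRingEnd ℂ) (simplexEnc q y α)
      = (q : ℂ) - 1 - (if x = y then 0 else (q : ℂ)) := by
  have hq0 : (q : ℂ) ≠ 0 := by
    have : q ≠ 0 := by omega
    exact_mod_cast this
  set ω : ℂ := Complex.exp (2 * Real.pi * Complex.I / q) with hω
  have hprim : IsPrimitiveRoot ω q := Complex.isPrimitiveRoot_exp q (by omega)
  have hω0 : ω ≠ 0 := Complex.exp_ne_zero _
  set ζ : ℂ := ω ^ (x : ℕ) / ω ^ (y : ℕ) with hζ
  have hterm : ∀ α : Fin (q - 1),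
      simplexEnc q x α * (starRingEnd ℂ) (simplexEnc q y α) = ζ ^ ((α : ℕ) + 1) := by
    intro α
    have h1 : ∀ z : Fin q, simplexEnc q z α = (ω ^ (z : ℕ)) ^ ((α : ℕ) + 1) := by
      intro z
      rw [simplexEnc, hω, ← Complex.exp_nat_mul, ← Complex.exp_nat_mul]
      congr 1
      push_cast
      ring
    have h2 : (starRingEnd ℂ) ω = ω⁻¹ := by
      rw [hω, ← Complex.exp_conj, ← Complex.exp_neg]
      congr 1
      simp [Complex.conj_ofNat]
      ring
    rw [h1, h1, map_pow, map_pow, h2, hζ, div_pow, div_eq_mul_inv, inv_pow, inv_pow]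
  rw [Finset.sum_congr rfl (fun α _ => hterm α),
    Fin.sum_univ_eq_sum_range (fun k => ζ ^ (k + 1)) (q - 1)]
  have hsum : ∑ k ∈ Finset.range (q - 1), ζ ^ (k + 1) = (∑ k ∈ Finset.range q, ζ ^ k) - 1 := by
    obtain ⟨m, rfl⟩ : ∃ m, q = m + 1 := ⟨q - 1, by omega⟩
    rw [Finset.sum_range_succ' _ m]
    simp
  rw [hsum]
  by_cases hxy : x = y
  · have : ζ = 1 := by
      rw [hζ, hxy]
      exact div_self (pow_ne_zero _ hω0)
    simp [this, hxy]
  · have hne : ζ ≠ 1 := by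
      intro h
      rw [hζ, div_eq_one_iff_eq (pow_ne_zero _ hω0)] at h
      exact hxy (Fin.ext (hprim.pow_inj x.2 y.2 h))
    have hpow : ζ ^ q = 1 := by
      rw [hζ, div_pow, ← pow_mul, ← pow_mul, mul_comm, mul_comm (y : ℕ), pow_mul, pow_mul,
        hprim.pow_eq_one]
      simp
    rw [geom_sum_eq hne, hpow]
    simp [hxy]

lemma simplex_normSq {L : ℕ} (q : ℕ) (hq : 2 ≤ q) (a : Fin L → Fin q) :
    ∑ α : Fin (q - 1), Complex.normSq (∑ i, simplexEnc q (a i) α)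
      = ∑ i, ∑ j, ((q : ℝ) - 1 - (if a i = a j then 0 else (q : ℝ))) := by
  have : ((∑ α : Fin (q - 1), Complex.normSq (∑ i, simplexEnc q (a i) α) : ℝ) : ℂ)
      = ((∑ i, ∑ j, ((q : ℝ) - 1 - (if a i = a j then 0 else (q : ℝ))) : ℝ) : ℂ) := by
    push_cast
    simp_rw [Complex.normSq_eq_conj_mul_self, mul_comm ((starRingEnd ℂ) _), map_sum,
      Finset.sum_mul_sum]
    rw [Finset.sum_comm]
    refine Finset.sum_congr rfl fun i _ => ?_
    rw [Finset.sum_comm]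
    refine Finset.sum_congr rfl fun j _ => ?_
    rw [simplex_inner q hq]
    split_ifs <;> simp
  exact_mod_cast this

lemma relDist_sum {n : ℕ} {A : Type*} [DecidableEq A] (hn : n ≠ 0) (x y : Fin n → A) (t : ℝ) :
    ∑ p, (if x p = y p then 0 else t) = t * n * relDist x y := by
  have : (n : ℝ) ≠ 0 := by exact_mod_cast hn
  have h : ({i : Fin n | x i ≠ y i}.ncard) = (Finset.univ.filter fun i => x i ≠ y i).card := by
    rw [← Set.ncard_coe_finset]
    simp
  rw [relDist, h, Finset.card_filter]
  push_cast
  field_simp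
  rw [Finset.mul_sum]
  refine Finset.sum_congr rfl fun i _ => ?_
  by_cases hh : x i = y i <;> simp [hh]

lemma sum_lt_symm {L : ℕ} (f : Fin L → Fin L → ℝ) (hs : ∀ i j, f i j = f j i)
    (h0 : ∀ i, f i i = 0) :
    ∑ i, ∑ j, f i j = 2 * ∑ i, ∑ j, if i < j then f i j else 0 := by
  have h1 : ∑ i, ∑ j, (if i < j then f i j else 0) = ∑ i, ∑ j, if j < i then f i j else 0 := by
    rw [Finset.sum_comm]
    refine Finset.sum_congr rfl fun i _ => Finset.sum_congr rfl fun j _ => ?_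
    rw [hs]
  rw [two_mul]
  nth_rewrite 2 [h1]
  rw [← Finset.sum_add_distrib]
  refine Finset.sum_congr rfl fun i _ => ?_
  rw [← Finset.sum_add_distrib]
  refine Finset.sum_congr rfl fun j _ => ?_
  rcases lt_trichotomy i j with h | h | h
  · simp [h, h.not_gt]
  · subst h
    simp [h0]
  · simp [h, h.not_gt]

/-- If the matrix φ(C)/√((q−1)n) (columns indexed by codewords of C)
satisfies RIP-2 of order L with constant 1/2, then every L distinct codewords of C have
average pairwise relative distance at least (1 − 1/q)(1 − 1/(2(L−1))). -/
theorem stmt7 (q L n : ℕ) (hq : 2 ≤ q) (hL : 2 ≤ L)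
    (C : Set (Fin n → Fin q)) [Fintype C]
    (hRIP : RIP2 (fun (p : Fin n × Fin (q - 1)) (c : C) =>
        simplexEncVec q n (c : Fin n → Fin q) p /
          ((Real.sqrt (((q : ℝ) - 1) * n) : ℝ) : ℂ)) L (1 / 2)) :
    ∀ c : Fin L → (Fin n → Fin q), Function.Injective c → (∀ i, c i ∈ C) →
      (1 - 1 / (q : ℝ)) * (1 - 1 / (2 * ((L : ℝ) - 1))) ≤ avgPairDist c := by
  intro c hc hcC
  classical
  have hn : n ≠ 0 := by
    rintro rfl
    have := hc (Subsingleton.elim (c ⟨0, by omega⟩) (c ⟨1, by omega⟩))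
    simp at this
  have hnR : (0 : ℝ) < n := by exact_mod_cast Nat.pos_of_ne_zero hn
  have hqR : (2 : ℝ) ≤ q := by exact_mod_cast hq
  have hLR : (2 : ℝ) ≤ L := by exact_mod_cast hL
  have hK : (0 : ℝ) < ((q : ℝ) - 1) * n := mul_pos (by linarith) hnR
  let d : Fin L → C := fun i => ⟨c i, hcC i⟩
  have hd : Function.Injective d := fun i j h => hc (congrArg Subtype.val h)
  let S : Finset C := Finset.univ.image d
  have hS : S.card = L := by
    simp [S, Finset.card_image_of_injective _ hd]
  have hsum : ∀ g : C → ℂ, ∑ z, g z * (if z ∈ S then (1 : ℂ) else 0) = ∑ i, g (d i) := by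
    intro g
    simp only [mul_ite, mul_one, mul_zero, Finset.sum_ite_mem, Finset.univ_inter]
    exact Finset.sum_image (fun i _ j _ h => hd h)
  have hub := (hRIP (fun z => if z ∈ S then 1 else 0) (by
    have : {z : C | (if z ∈ S then (1 : ℂ) else 0) ≠ 0} = (S : Set C) := by
      ext z
      simp
    rw [this, Set.ncard_coe_finset, hS])).2
  have hx : ∑ z : C, Complex.normSq (if z ∈ S then (1 : ℂ) else 0) = L := by
    have : ∀ z : C, Complex.normSq (if z ∈ S then (1 : ℂ) else 0) = if z ∈ S then 1 else 0 := by
      intro z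
      split_ifs <;> simp
    simp_rw [this]
    rw [Finset.sum_ite_mem, Finset.univ_inter]
    simp [hS]
  rw [hx] at hub
  have hM : ∑ r : Fin n × Fin (q - 1), Complex.normSq (Matrix.mulVec
      (fun (p : Fin n × Fin (q - 1)) (c : C) => simplexEncVec q n (c : Fin n → Fin q) p /
          ((Real.sqrt (((q : ℝ) - 1) * n) : ℝ) : ℂ)) (fun z => if z ∈ S then 1 else 0) r)
      = (∑ i, ∑ j, (((q : ℝ) - 1) * n - q * n * relDist (c i) (c j))) / (((q : ℝ) - 1) * n) := by
    have h1 : ∀ r : Fin n × Fin (q - 1), Complex.normSq (Matrix.mulVec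
      (fun (p : Fin n × Fin (q - 1)) (c : C) => simplexEncVec q n (c : Fin n → Fin q) p /
          ((Real.sqrt (((q : ℝ) - 1) * n) : ℝ) : ℂ)) (fun z => if z ∈ S then 1 else 0) r)
        = Complex.normSq (∑ i, simplexEnc q (c i r.1) r.2) / (((q : ℝ) - 1) * n) := by
      intro r
      simp only [Matrix.mulVec, dotProduct]
      rw [hsum, ← Finset.sum_div, Complex.normSq_div, Complex.normSq_ofReal,
        Real.mul_self_sqrt hK.le]
      rfl
    rw [Finset.sum_congr rfl (fun r _ => h1 r), ← Finset.sum_div]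
    congr 1
    rw [Fintype.sum_prod_type]
    simp only
    rw [Finset.sum_congr rfl (fun p _ => simplex_normSq q hq (fun i => c i p)), Finset.sum_comm]
    refine Finset.sum_congr rfl fun i _ => ?_
    rw [Finset.sum_comm]
    refine Finset.sum_congr rfl fun j _ => ?_
    rw [Finset.sum_sub_distrib, relDist_sum hn]
    simp
    ring
  rw [hM, div_le_iff₀ hK] at hub
  simp only [Finset.sum_sub_distrib, ← Finset.mul_sum] at hub
  rw [sum_lt_symm (fun i j => relDist (c i) (c j))
    (fun i j => by simp only [relDist, ne_comm]) (fun i => by simp [relDist])] at hub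
  simp only [Finset.sum_const, Finset.card_univ, Fintype.card_fin, nsmul_eq_mul] at hub
  rw [avgPairDist, Nat.cast_choose_two]
  set T : ℝ := ∑ i : Fin L, ∑ j : Fin L, if i < j then relDist (c i) (c j) else 0
  have hL1 : (0 : ℝ) < (L : ℝ) - 1 := by linarith
  have hub2 : (L : ℝ) * (L * (q - 1)) - 2 * q * T ≤ (1 + 1 / 2) * L * (q - 1) := by
    refine le_of_mul_le_mul_right ?_ hnR
    linarith
  rw [le_div_iff₀ (by positivity)]
  have e : (1 - 1 / (q : ℝ)) * (1 - 1 / (2 * ((L : ℝ) - 1))) * (L * (L - 1) / 2)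
      = (L * (L * (q - 1)) - (1 + 1 / 2) * L * (q - 1)) / (2 * q) := by
    have : (q : ℝ) ≠ 0 := by positivity
    field_simp
    ring
  rw [e, div_le_iff₀ (by positivity)]
  linarith
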